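/- arXiv:2405.10797 — 4 statements merged into one kernel-verified Lean document; each statement's English description precedes it below -/
import Mathlib

section
/- Define V(t,s) for 0 ≤ t ≤ 1 and 0 ≤ s ≤ 1+t by: V(t,s) = 4(1−t)((1−t)²t + 3(1−t)t² + 2t³ − s³) for 0 ≤ s ≤ t; V(t,s) = 4(s−t)(3(1−s)²t + 3(1−s)t² + t³) + 4(1−s)t((1−s)² + 3(1−s)t + t²) for t ≤ s ≤ 1; V(t,s) = 4(1−t)(1+t−s)³ for 1 ≤ s ≤ 1+t, and let g₅(t) = 4t − 4t³. Then for every real number ξ satisfying ∫₀¹ (4t−2)e^{−(4t−2)ξ} g₅(t) dt = 0, one has ∫₀¹ e^{−(4t−2)ξ} (∫₀^{1+t} V(t,s) ds) dt = (3/4)·∫₀¹ e^{−(4t−2)ξ} g₅(t) dt. -/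
open MeasureTheory intervalIntegral

/-- The volume function `V(t,s) = vol(W^{E_W}_{(1,t)} − s E_l)` on the quintic Del Pezzo
fivefold, defined piecewise (the formulas agree at the break points `s = t`, `s = 1`). -/
noncomputable def VolEW (t s : ℝ) : ℝ :=
  if s ≤ t then
    4 * (1 - t) * ((1 - t) ^ 2 * t + 3 * (1 - t) * t ^ 2 + 2 * t ^ 3 - s ^ 3)
  else if s ≤ 1 then
    4 * (s - t) * (3 * (1 - s) ^ 2 * t + 3 * (1 - s) * t ^ 2 + t ^ 3) +
      4 * (1 - s) * t * ((1 - s) ^ 2 + 3 * (1 - s) * t + t ^ 2)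
  else
    4 * (1 - t) * (1 + t - s) ^ 3

/-- The volume function `g₅(t) = 4t − 4t³`. -/
noncomputable def gFive (t : ℝ) : ℝ := 4 * t - 4 * t ^ 3

/-!
Integrating the volume function over `s` gives `∫₀^{1+t} V(t,s) ds = (1 + t) / 2 * g₅(t)`, an affine
multiple of `g₅`. The constraint on the weight says that the weighted measure `w(t) g₅(t) dt` on
`[0, 1]` has barycentre `1 / 2`. An affine function integrates to its value at the barycentre times
the total mass, and `(1 + t) / 2` takes the value `3 / 4` at `t = 1 / 2`.
-/

theorem integral_affine_mul_of_integral_sub_mul_eq_zero {μ : Measure ℝ} {a b c : ℝ} {h : ℝ → ℝ}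
    (h_int : IntervalIntegrable h μ a b) (h_bary : ∫ t in a..b, (t - c) * h t ∂μ = 0) (m k : ℝ) :
    ∫ t in a..b, (m * t + k) * h t ∂μ = (m * c + k) * ∫ t in a..b, h t ∂μ := by
  have h_int_sub : IntervalIntegrable (fun t ↦ (t - c) * h t) μ a b :=
    h_int.continuousOn_mul (by fun_prop)
  calc ∫ t in a..b, (m * t + k) * h t ∂μ
      = ∫ t in a..b, (m * ((t - c) * h t) + (m * c + k) * h t) ∂μ := by
        congr! 2 with t; ring
    _ = m * (∫ t in a..b, (t - c) * h t ∂μ) + (m * c + k) * ∫ t in a..b, h t ∂μ := by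
        rw [integral_add (h_int_sub.const_mul _) (h_int.const_mul _),
          intervalIntegral.integral_const_mul, intervalIntegral.integral_const_mul]
    _ = (m * c + k) * ∫ t in a..b, h t ∂μ := by rw [h_bary, mul_zero, zero_add]

theorem integral_cubic (a b c₀ c₁ c₂ c₃ : ℝ) :
    ∫ x in a..b, (c₀ + c₁ * x + c₂ * x ^ 2 + c₃ * x ^ 3) =
      c₀ * (b - a) + c₁ * (b ^ 2 - a ^ 2) / 2 + c₂ * (b ^ 3 - a ^ 3) / 3 +
        c₃ * (b ^ 4 - a ^ 4) / 4 := by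
  have h_deriv (x : ℝ) : HasDerivAt
      (fun y ↦ c₀ * y + c₁ * (y ^ 2 / 2) + c₂ * (y ^ 3 / 3) + c₃ * (y ^ 4 / 4))
      (c₀ + c₁ * x + c₂ * x ^ 2 + c₃ * x ^ 3) x := by
    have h_pow (n : ℕ) := (hasDerivAt_pow n x).div_const (n : ℝ)
    refine (((((hasDerivAt_id' x).const_mul c₀).add ((h_pow 2).const_mul c₁)).add
      ((h_pow 3).const_mul c₂)).add ((h_pow 4).const_mul c₃)).congr_deriv ?_
    norm_num
  rw [integral_eq_sub_of_hasDerivAt (fun x _ ↦ h_deriv x)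
    (Continuous.intervalIntegrable (by fun_prop) _ _)]
  ring

section VolEW

variable {t : ℝ}

theorem VolEW_of_le {s : ℝ} (hst : s ≤ t) :
    VolEW t s = 4 * (1 - t) * (t + t ^ 2 - s ^ 3) := by
  rw [VolEW, if_pos hst]
  ring

theorem VolEW_of_le_of_le_one {s : ℝ} (hts : t ≤ s) (hs : s ≤ 1) :
    VolEW t s =
      4 * t * ((1 - t) * (3 * (1 - s) ^ 2 + 3 * t * (1 - s) + t ^ 2) - 2 * (1 - s) ^ 3) := by
  rcases hts.eq_or_lt with rfl | hts
  · rw [VolEW_of_le le_rfl]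
    ring
  · rw [VolEW, if_neg hts.not_ge, if_pos hs]
    ring

theorem VolEW_of_one_le {s : ℝ} (ht : t ≤ 1) (hs : 1 ≤ s) :
    VolEW t s = 4 * (1 - t) * (1 + t - s) ^ 3 := by
  rcases hs.eq_or_lt with rfl | hs
  · rw [VolEW_of_le_of_le_one ht le_rfl]
    ring
  · rw [VolEW, if_neg (ht.trans_lt hs).not_ge, if_neg hs.not_ge]

theorem continuous_VolEW (ht : t ≤ 1) : Continuous (VolEW t) := by
  unfold VolEW
  refine Continuous.if_le (by fun_prop)
    (Continuous.if_le (by fun_prop) (by fun_prop) continuous_id continuous_const ?_)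
    continuous_id continuous_const ?_
  · rintro s rfl
    ring
  · rintro s rfl
    rw [if_pos ht]
    ring

theorem integral_VolEW_zero_self (ht : 0 ≤ t) :
    ∫ s in (0 : ℝ)..t, VolEW t s = (1 - t) * t ^ 2 * (4 + 4 * t - t ^ 2) := by
  have h_cubic : Set.EqOn (VolEW t)
      (fun s ↦ 4 * (1 - t) * (t + t ^ 2) + 0 * s + 0 * s ^ 2 + -4 * (1 - t) * s ^ 3)
      (Set.uIcc 0 t) := by
    intro s hs
    rw [Set.uIcc_of_le ht] at hs
    rw [VolEW_of_le hs.2]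
    ring
  rw [integral_congr h_cubic, integral_cubic]
  ring

theorem integral_VolEW_self_one (ht : t ≤ 1) :
    ∫ s in t..1, VolEW t s = 2 * t * (1 - t) ^ 2 * (1 + t) := by
  let cubic (u : ℝ) : ℝ := 4 * t ^ 3 * (1 - t) + 12 * t ^ 2 * (1 - t) * u +
    12 * t * (1 - t) * u ^ 2 + -8 * t * u ^ 3
  have h_cubic : Set.EqOn (VolEW t) (fun s ↦ cubic (1 - s)) (Set.uIcc t 1) := by
    intro s hs
    rw [Set.uIcc_of_le ht] at hs
    rw [VolEW_of_le_of_le_one hs.1 hs.2]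
    ring
  rw [integral_congr h_cubic, integral_comp_sub_left cubic, integral_cubic]
  ring

theorem integral_VolEW_one_one_add (ht₀ : 0 ≤ t) (ht₁ : t ≤ 1) :
    ∫ s in (1 : ℝ)..(1 + t), VolEW t s = (1 - t) * t ^ 4 := by
  have h_cube : Set.EqOn (VolEW t) (fun s ↦ 4 * (1 - t) * (1 + t - s) ^ 3)
      (Set.uIcc 1 (1 + t)) := by
    intro s hs
    rw [Set.uIcc_of_le (le_add_of_nonneg_right ht₀)] at hs
    exact VolEW_of_one_le ht₁ hs.1
  rw [integral_congr h_cube, intervalIntegral.integral_const_mul,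
    integral_comp_sub_left (fun u ↦ u ^ 3), integral_pow]
  ring

theorem integral_VolEW_eq_mul_gFive (ht₀ : 0 ≤ t) (ht₁ : t ≤ 1) :
    ∫ s in (0 : ℝ)..(1 + t), VolEW t s = (1 / 2 * t + 1 / 2) * gFive t := by
  have h_int (a b : ℝ) : IntervalIntegrable (VolEW t) volume a b :=
    (continuous_VolEW ht₁).intervalIntegrable a b
  rw [← integral_add_adjacent_intervals (h_int 0 1) (h_int 1 (1 + t)),
    ← integral_add_adjacent_intervals (h_int 0 t) (h_int t 1),
    integral_VolEW_zero_self ht₀, integral_VolEW_self_one ht₁,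
    integral_VolEW_one_one_add ht₀ ht₁, gFive]
  ring

end VolEW

theorem continuous_gFive : Continuous gFive := by
  unfold gFive
  fun_prop

theorem Sg_WEW_El_general {w : ℝ → ℝ}
    (hw_int : IntervalIntegrable (fun t ↦ w t * gFive t) volume 0 1)
    (hw : ∫ t in (0 : ℝ)..1, (4 * t - 2) * w t * gFive t = 0) :
    ∫ t in (0 : ℝ)..1, w t * (∫ s in (0 : ℝ)..(1 + t), VolEW t s) =
      3 / 4 * ∫ t in (0 : ℝ)..1, w t * gFive t := by
  have h_bary : ∫ t in (0 : ℝ)..1, (t - 1 / 2) * (w t * gFive t) = 0 := by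
    calc ∫ t in (0 : ℝ)..1, (t - 1 / 2) * (w t * gFive t)
        = ∫ t in (0 : ℝ)..1, 1 / 4 * ((4 * t - 2) * w t * gFive t) := by
          congr! 2 with t; ring
      _ = 0 := by rw [intervalIntegral.integral_const_mul, hw, mul_zero]
  calc ∫ t in (0 : ℝ)..1, w t * (∫ s in (0 : ℝ)..(1 + t), VolEW t s)
      = ∫ t in (0 : ℝ)..1, (1 / 2 * t + 1 / 2) * (w t * gFive t) := by
        refine integral_congr fun t ht ↦ ?_
        rw [Set.uIcc_of_le zero_le_one] at ht
        simp only [integral_VolEW_eq_mul_gFive ht.1 ht.2]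
        ring
    _ = (1 / 2 * (1 / 2) + 1 / 2) * ∫ t in (0 : ℝ)..1, w t * gFive t :=
        integral_affine_mul_of_integral_sub_mul_eq_zero hw_int h_bary _ _
    _ = 3 / 4 * ∫ t in (0 : ℝ)..1, w t * gFive t := by norm_num

/-- The weighted computation `S^g(W^{E_W}_{••}; E_l) = 3/4`: for any soliton weight `ξ`
(i.e. any root of the displayed constraint),
`∫₀¹ e^{−(4t−2)ξ} (∫₀^{1+t} V(t,s) ds) dt = (3/4)·∫₀¹ e^{−(4t−2)ξ} g₅(t) dt`. -/
theorem Sg_WEW_El (ξ : ℝ)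
    (hξ : (∫ t in (0:ℝ)..1, (4 * t - 2) * Real.exp (-(4 * t - 2) * ξ) * gFive t) = 0) :
    (∫ t in (0:ℝ)..1,
        Real.exp (-(4 * t - 2) * ξ) * (∫ s in (0:ℝ)..(1 + t), VolEW t s))
      = 3 / 4 * ∫ t in (0:ℝ)..1, Real.exp (-(4 * t - 2) * ξ) * gFive t :=
  Sg_WEW_El_general
    ((by fun_prop : Continuous fun t ↦ Real.exp (-(4 * t - 2) * ξ)).mul
      continuous_gFive |>.intervalIntegrable 0 1) hξ
end

section
/- Define g₄ : [0,2] → ℝ by g₄(u) = (2−u)³ − 9(2−u)(1−u)² + 10(1−u)³ for 0 ≤ u ≤ 1 and g₄(u) = (2−u)³ for 1 ≤ u ≤ 2, and let ξ₀ be the unique real number with ∫₀² (3u−2)e^{−(3u−2)ξ₀} g₄(u) du = 0. Let Δ₁ = {(u,v) ∈ ℝ² : 0 ≤ v ≤ u/2, u−1 ≤ v}, Δ₂ = {(u,v) : 0 ≤ v ≤ u−1, u ≤ 2}, and P(u,v) = (2−u)³ − 9(2−u)(1−u+v)² + 10(1−u+v)³. Then ∫_{Δ₁} e^{−(3u−2)ξ₀}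 P(u,v) du dv + ∫_{Δ₂} e^{−(3u−2)ξ₀} (2−u)³ du dv < (1/3)·∫₀² e^{−(3u−2)ξ₀} g₄(u) du. -/
open MeasureTheory intervalIntegral

/-- The volume function `g₄(u) = vol(π*O(1) − u E_S)` on the blow-up of the quintic
Del Pezzo fourfold `M₄` along the non-vertex-type plane `S`. -/
noncomputable def gFour (u : ℝ) : ℝ :=
  if u ≤ 1 then (2 - u) ^ 3 - 9 * (2 - u) * (1 - u) ^ 2 + 10 * (1 - u) ^ 3
  else (2 - u) ^ 3

/-- Region `Δ₁ = {(u,v) : 0 ≤ v ≤ u/2, u−1 ≤ v}`. -/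
def Delta1F : Set (ℝ × ℝ) :=
  {p | 0 ≤ p.2 ∧ p.2 ≤ p.1 / 2 ∧ p.1 - 1 ≤ p.2}

/-- Region `Δ₂ = {(u,v) : 0 ≤ v ≤ u−1, u ≤ 2}`. -/
def Delta2F : Set (ℝ × ℝ) :=
  {p | 0 ≤ p.2 ∧ p.2 ≤ p.1 - 1 ∧ p.1 ≤ 2}

/-- The volume polynomial `P(u,v) = (2−u)³ − 9(2−u)(1−u+v)² + 10(1−u+v)³`. -/
def PvolF (u v : ℝ) : ℝ :=
  (2 - u) ^ 3 - 9 * (2 - u) * (1 - u + v) ^ 2 + 10 * (1 - u + v) ^ 3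

/-!
Write `P(u,v) = Q(2 - u, 1 - u + v)` and `g₄(u) = Q(2 - u, max (1 - u) 0)` with the cubic
`Q(t,s) = t³ - 9ts² + 10s³`, which is strictly decreasing in `s` on `[0, 3t/5]`. On `Δ₁` one has
`max (1 - u) 0 ≤ 1 - u + v ≤ (2 - u)/2`, hence `P(u,v) < g₄(u)` off the lines `v = 0` and
`v = u - 1`, while `(2 - u)³ = g₄(u)` on `Δ₂`. Therefore the left-hand side is less than the
integral of the weight times `g₄(u)` over the triangle `Δ₁ ∪ Δ₂`, whose slice at `u` has length
`u/2`. Since `u/2 = (3u - 2)/6 + 1/3`, the condition on `ξ₀` turns that integral into the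
right-hand side.
-/

section Measure

variable {α β E : Type*} [MeasurableSpace α] [MeasurableSpace β]
  [NormedAddCommGroup E] [NormedSpace ℝ E] {μ : Measure α} {ν : Measure β}

theorem integral_lt_integral_of_ae_lt {f g : α → ℝ} (hμ : μ ≠ 0) (hf : Integrable f μ)
    (hg : Integrable g μ) (hlt : ∀ᵐ x ∂μ, f x < g x) : ∫ x, f x ∂μ < ∫ x, g x ∂μ := by
  have hpos : ∀ᵐ x ∂μ, 0 < g x - f x := hlt.mono fun x => sub_pos.2
  have hsupport : Function.support (fun x => g x - f x) =ᵐ[μ] Set.univ :=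
    Filter.eventuallyEq_univ.2 (hpos.mono fun x hx => hx.ne')
  rw [← sub_pos, ← integral_sub hg hf,
    integral_pos_iff_support_of_nonneg_ae (hpos.mono fun x => le_of_lt) (hg.sub hf),
    measure_congr hsupport]
  exact Measure.measure_univ_pos.2 hμ

theorem ae_prod_snd_ne [MeasurableEq β] [SFinite ν] [NullSingletonClass ν] {f : α → β}
    (hf : Measurable f) : ∀ᵐ p ∂μ.prod ν, p.2 ≠ f p.1 := by
  have hmeas : MeasurableSet {p : α × β | p.2 ≠ f p.1} :=
    (measurableSet_eq_fun measurable_snd (hf.comp measurable_fst)).compl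
  exact (Measure.ae_prod_iff_ae_ae hmeas).2 (.of_forall fun x => Measure.ae_ne ν (f x))

theorem setIntegral_prod_fst [CompleteSpace E] [SFinite μ] [SFinite ν] {S : Set (α × β)} {f : α → E}
    (hS : MeasurableSet S) (hf : IntegrableOn (fun p => f p.1) S (μ.prod ν)) :
    ∫ p in S, f p.1 ∂μ.prod ν = ∫ x, ν.real (Prod.mk x ⁻¹' S) • f x ∂μ := by
  rw [← MeasureTheory.integral_indicator hS, integral_prod _ (hf.integrable_indicator hS)]
  refine integral_congr_ae (.of_forall fun x => ?_)
  calc ∫ y, S.indicator (fun p => f p.1) (x, y) ∂ν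
      = ∫ y, (Prod.mk x ⁻¹' S).indicator (fun _ => f x) y ∂ν := rfl
    _ = ν.real (Prod.mk x ⁻¹' S) • f x := integral_indicator_const _ (measurable_prodMk_left hS)

end Measure

/-- The cubic `Q(t,s) = t³ - 9ts² + 10s³` of which both `g₄` and `P` are specializations. -/
def volCubic (t s : ℝ) : ℝ :=
  t ^ 3 - 9 * t * s ^ 2 + 10 * s ^ 3

theorem volCubic_strictAntiOn (t : ℝ) : StrictAntiOn (volCubic t) (Set.Icc 0 (3 * t / 5)) := by
  rintro a ⟨ha, -⟩ b ⟨-, hb⟩ hab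
  have hfactor : volCubic t a - volCubic t b
      = (b - a) * (9 * t * (a + b) - 10 * (a ^ 2 + a * b + b ^ 2)) := by
    unfold volCubic; ring
  have hcofactor : 0 < 9 * t * (a + b) - 10 * (a ^ 2 + a * b + b ^ 2) :=
    calc 0 < 5 * ((b - a) * (b + 2 * a)) := by
          have := sub_pos.2 hab
          have : 0 < b + 2 * a := by linarith
          positivity
      _ = 15 * b * (a + b) - 10 * (a ^ 2 + a * b + b ^ 2) := by ring
      _ ≤ 9 * t * (a + b) - 10 * (a ^ 2 + a * b + b ^ 2) := by
          gcongr ?_ * _ - _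
          · linarith
          · linarith
  exact sub_pos.1 (hfactor ▸ mul_pos (sub_pos.2 hab) hcofactor)

theorem PvolF_eq_volCubic (u v : ℝ) : PvolF u v = volCubic (2 - u) (1 - u + v) := rfl

theorem gFour_eq_volCubic (u : ℝ) : gFour u = volCubic (2 - u) (max (1 - u) 0) := by
  unfold gFour volCubic
  split_ifs with hu
  · rw [max_eq_left (by linarith)]
  · rw [max_eq_right (by linarith)]
    ring

theorem gFour_of_one_le {u : ℝ} (hu : 1 ≤ u) : gFour u = (2 - u) ^ 3 := by
  rw [gFour_eq_volCubic, max_eq_right (by linarith), volCubic]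
  ring

theorem continuous_gFour : Continuous gFour := by
  simp only [funext gFour_eq_volCubic, volCubic]
  fun_prop

theorem continuous_PvolF : Continuous fun p : ℝ × ℝ => PvolF p.1 p.2 := by
  unfold PvolF
  fun_prop

theorem PvolF_lt_gFour {u v : ℝ} (hv : 0 < v) (huv : u - 1 < v) (hvu : v ≤ u / 2) :
    PvolF u v < gFour u := by
  rw [PvolF_eq_volCubic, gFour_eq_volCubic]
  have hlt : max (1 - u) 0 < 1 - u + v := max_lt (by linarith) (by linarith)
  have hle : 1 - u + v ≤ 3 * (2 - u) / 5 := by linarith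
  have hnonneg : 0 ≤ max (1 - u) 0 := le_max_right _ _
  exact volCubic_strictAntiOn (2 - u) ⟨hnonneg, hlt.le.trans hle⟩ ⟨hnonneg.trans hlt.le, hle⟩ hlt

/-- The triangle `Δ = Δ₁ ∪ Δ₂ = {(u,v) : 0 ≤ v ≤ u/2, u ≤ 2}`, the full domain of integration. -/
def DeltaF : Set (ℝ × ℝ) :=
  {p | 0 ≤ p.2 ∧ p.2 ≤ p.1 / 2 ∧ p.1 ≤ 2}

theorem Delta1F_union_Delta2F : Delta1F ∪ Delta2F = DeltaF := by
  ext ⟨u, v⟩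
  simp only [Delta1F, Delta2F, DeltaF, Set.mem_union, Set.mem_ofPred_eq]
  grind

theorem Delta1F_subset_DeltaF : Delta1F ⊆ DeltaF :=
  Delta1F_union_Delta2F ▸ Set.subset_union_left

theorem Delta2F_subset_DeltaF : Delta2F ⊆ DeltaF :=
  Delta1F_union_Delta2F ▸ Set.subset_union_right

theorem measurableSet_Delta1F : MeasurableSet Delta1F := by
  unfold Delta1F
  measurability

theorem measurableSet_Delta2F : MeasurableSet Delta2F := by
  unfold Delta2F
  measurability

theorem measurableSet_DeltaF : MeasurableSet DeltaF :=
  Delta1F_union_Delta2F ▸ measurableSet_Delta1F.union measurableSet_Delta2F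

theorem DeltaF_subset_Icc_prod_Icc : DeltaF ⊆ Set.Icc 0 2 ×ˢ Set.Icc 0 1 := by
  rintro ⟨u, v⟩ ⟨hv, hvu, hu⟩
  dsimp only at hv hvu hu
  exact ⟨⟨by linarith, hu⟩, hv, by linarith⟩

theorem aedisjoint_Delta1F_Delta2F : AEDisjoint volume Delta1F Delta2F := by
  refine measure_mono_null ?_ (ae_prod_snd_ne (μ := volume) (ν := volume)
    (measurable_id.sub_const (1 : ℝ)))
  rintro p ⟨⟨-, -, hle⟩, -, hge, -⟩ hne
  exact hne (le_antisymm hge hle)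

theorem volume_Delta1F_ne_zero : volume Delta1F ≠ 0 := by
  have hsub : Set.Ioo (1 / 2 : ℝ) 1 ×ˢ Set.Ioo (0 : ℝ) (1 / 4) ⊆ Delta1F := by
    rintro ⟨u, v⟩ ⟨⟨hu, hu'⟩, hv, hv'⟩
    dsimp only at hu hu' hv hv'
    exact ⟨hv.le, by dsimp only; linarith, by dsimp only; linarith⟩
  have hne : (Set.Ioo (1 / 2 : ℝ) 1 ×ˢ Set.Ioo (0 : ℝ) (1 / 4)).Nonempty :=
    (Set.nonempty_Ioo.2 (by norm_num)).prod (Set.nonempty_Ioo.2 (by norm_num))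
  exact (((isOpen_Ioo.prod isOpen_Ioo).measure_pos volume hne).trans_le (measure_mono hsub)).ne'

theorem volume_real_fiber_DeltaF (u : ℝ) :
    volume.real (Prod.mk u ⁻¹' DeltaF) = (Set.Icc 0 2).indicator (fun x => x / 2) u := by
  by_cases hu : u ∈ Set.Icc (0 : ℝ) 2
  · have hfiber : Prod.mk u ⁻¹' DeltaF = Set.Icc 0 (u / 2) := by
      ext v
      simp [DeltaF, hu.2]
    rw [hfiber, Set.indicator_of_mem hu, Real.volume_real_Icc_of_le (by linarith [hu.1]), sub_zero]
  · have hfiber : Prod.mk u ⁻¹' DeltaF = ∅ :=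
      Set.eq_empty_of_forall_notMem fun v hv => hu (DeltaF_subset_Icc_prod_Icc hv).1
    rw [hfiber, Set.indicator_of_notMem hu, measureReal_empty]

theorem setIntegral_DeltaF_fst {f : ℝ → ℝ} (hf : IntegrableOn (fun p => f p.1) DeltaF) :
    ∫ p in DeltaF, f p.1 = ∫ u in (0 : ℝ)..2, u / 2 * f u := by
  rw [Measure.volume_eq_prod] at hf ⊢
  rw [setIntegral_prod_fst measurableSet_DeltaF hf, integral_of_le zero_le_two,
    ← integral_Icc_eq_integral_Ioc, ← MeasureTheory.integral_indicator measurableSet_Icc]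
  simp only [volume_real_fiber_DeltaF, smul_eq_mul, Set.indicator_mul_left]

section Weight

variable {w : ℝ → ℝ}

theorem integrableOn_DeltaF_weight_mul {F : ℝ × ℝ → ℝ} (hw : ContinuousOn w (Set.Icc 0 2))
    (hF : Continuous F) : IntegrableOn (fun p => w p.1 * F p) DeltaF := by
  have hcont : ContinuousOn (fun p => w p.1 * F p) (Set.Icc 0 2 ×ˢ Set.Icc 0 1) :=
    (hw.comp continuousOn_fst fun p hp => hp.1).mul hF.continuousOn
  exact (hcont.integrableOn_compact (isCompact_Icc.prod isCompact_Icc)).mono_set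
    DeltaF_subset_Icc_prod_Icc

theorem setIntegral_Delta1F_weight_mul_PvolF_lt (hw : ContinuousOn w (Set.Icc 0 2))
    (hpos : ∀ u ∈ Set.Icc 0 2, 0 < w u) :
    ∫ p in Delta1F, w p.1 * PvolF p.1 p.2 < ∫ p in Delta1F, w p.1 * gFour p.1 := by
  refine integral_lt_integral_of_ae_lt (Measure.restrict_eq_zero.not.2 volume_Delta1F_ne_zero)
    ((integrableOn_DeltaF_weight_mul hw continuous_PvolF).mono_set Delta1F_subset_DeltaF)
    ((integrableOn_DeltaF_weight_mul hw (continuous_gFour.comp continuous_fst)).mono_set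
      Delta1F_subset_DeltaF) ?_
  have hne_zero : ∀ᵐ p : ℝ × ℝ, p.2 ≠ 0 := ae_prod_snd_ne measurable_const
  have hne_sub_one : ∀ᵐ p : ℝ × ℝ, p.2 ≠ p.1 - 1 := ae_prod_snd_ne (measurable_id.sub_const 1)
  filter_upwards [ae_restrict_mem measurableSet_Delta1F, ae_restrict_of_ae hne_zero,
    ae_restrict_of_ae hne_sub_one] with p hp hp_zero hp_sub_one
  have hu : p.1 ∈ Set.Icc 0 2 := (DeltaF_subset_Icc_prod_Icc (Delta1F_subset_DeltaF hp)).1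
  obtain ⟨hv, hvu, huv⟩ := hp
  exact mul_lt_mul_of_pos_left
    (PvolF_lt_gFour (hv.lt_of_ne' hp_zero) (huv.lt_of_ne' hp_sub_one) hvu) (hpos _ hu)

theorem setIntegral_Delta2F_weight_mul_cube (w : ℝ → ℝ) :
    ∫ p in Delta2F, w p.1 * (2 - p.1) ^ 3 = ∫ p in Delta2F, w p.1 * gFour p.1 := by
  refine setIntegral_congr_fun measurableSet_Delta2F fun p ⟨hv, hvu, _⟩ => ?_
  have hu : 1 ≤ p.1 := by linarith
  simp only [gFour_of_one_le hu]

theorem setIntegral_Delta1F_add_setIntegral_Delta2F (hw : ContinuousOn w (Set.Icc 0 2)) :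
    (∫ p in Delta1F, w p.1 * gFour p.1) + ∫ p in Delta2F, w p.1 * gFour p.1
      = ∫ u in (0 : ℝ)..2, u / 2 * (w u * gFour u) := by
  have hint : IntegrableOn (fun p : ℝ × ℝ => w p.1 * gFour p.1) DeltaF :=
    integrableOn_DeltaF_weight_mul hw (continuous_gFour.comp continuous_fst)
  rw [← setIntegral_DeltaF_fst hint, ← Delta1F_union_Delta2F]
  exact (setIntegral_union₀ aedisjoint_Delta1F_Delta2F measurableSet_Delta2F.nullMeasurableSet
    (hint.mono_set Delta1F_subset_DeltaF) (hint.mono_set Delta2F_subset_DeltaF)).symm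

theorem integral_half_mul_weight_mul_gFour (hw : ContinuousOn w (Set.Icc 0 2)) :
    ∫ u in (0 : ℝ)..2, u / 2 * (w u * gFour u)
      = 1 / 6 * (∫ u in (0 : ℝ)..2, (3 * u - 2) * w u * gFour u)
        + 1 / 3 * ∫ u in (0 : ℝ)..2, w u * gFour u := by
  have hwg : ContinuousOn (fun u => w u * gFour u) (Set.Icc 0 2) :=
    hw.mul continuous_gFour.continuousOn
  have hmoment : ContinuousOn (fun u => (3 * u - 2) * w u * gFour u) (Set.Icc 0 2) :=
    (ContinuousOn.mul (by fun_prop) hw).mul continuous_gFour.continuousOn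
  rw [← intervalIntegral.integral_const_mul, ← intervalIntegral.integral_const_mul,
    ← intervalIntegral.integral_add
    ((hmoment.intervalIntegrable_of_Icc zero_le_two).const_mul _)
    ((hwg.intervalIntegrable_of_Icc zero_le_two).const_mul _)]
  congr 1 with u
  ring

theorem Sg_WES_F_lt_general (hw : ContinuousOn w (Set.Icc 0 2)) (hpos : ∀ u ∈ Set.Icc 0 2, 0 < w u)
    (hmoment : ∫ u in (0 : ℝ)..2, (3 * u - 2) * w u * gFour u ≤ 0) :
    (∫ p in Delta1F, w p.1 * PvolF p.1 p.2) + (∫ p in Delta2F, w p.1 * (2 - p.1) ^ 3)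
      < 1 / 3 * ∫ u in (0 : ℝ)..2, w u * gFour u :=
  calc (∫ p in Delta1F, w p.1 * PvolF p.1 p.2) + (∫ p in Delta2F, w p.1 * (2 - p.1) ^ 3)
      < (∫ p in Delta1F, w p.1 * gFour p.1) + ∫ p in Delta2F, w p.1 * gFour p.1 := by
        rw [setIntegral_Delta2F_weight_mul_cube]
        gcongr
        exact setIntegral_Delta1F_weight_mul_PvolF_lt hw hpos
    _ = ∫ u in (0 : ℝ)..2, u / 2 * (w u * gFour u) :=
        setIntegral_Delta1F_add_setIntegral_Delta2F hw
    _ = 1 / 6 * (∫ u in (0 : ℝ)..2, (3 * u - 2) * w u * gFour u)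
        + 1 / 3 * ∫ u in (0 : ℝ)..2, w u * gFour u := integral_half_mul_weight_mul_gFour hw
    _ ≤ 1 / 3 * ∫ u in (0 : ℝ)..2, w u * gFour u := by linarith

end Weight

/-- The weighted estimate `S^g(W^{E_S}_{••}; F) < 1/3 · A_{E_S}(F)` for the soliton
candidate `ξ₀` of `M₄` (the root of the displayed constraint). -/
theorem Sg_WES_F_lt (ξ₀ : ℝ)
    (hξ : (∫ u in (0:ℝ)..2, (3 * u - 2) * Real.exp (-(3 * u - 2) * ξ₀) * gFour u) = 0) :
    (∫ p in Delta1F, Real.exp (-(3 * p.1 - 2) * ξ₀) * PvolF p.1 p.2) +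
      (∫ p in Delta2F, Real.exp (-(3 * p.1 - 2) * ξ₀) * (2 - p.1) ^ 3)
      < 1 / 3 * ∫ u in (0:ℝ)..2, Real.exp (-(3 * u - 2) * ξ₀) * gFour u := by
  exact Sg_WES_F_lt_general (w := fun u => Real.exp (-(3 * u - 2) * ξ₀)) (by fun_prop)
    (fun u _ => Real.exp_pos _) hξ.le
end

section
/- Define g₄ : [0,2] → ℝ by g₄(u) = (2−u)³ − 9(2−u)(1−u)² + 10(1−u)³ for 0 ≤ u ≤ 1 and g₄(u) = (2−u)³ for 1 ≤ u ≤ 2, and let ξ₀ be the unique real number with ∫₀² (3u−2)e^{−(3u−2)ξ₀} g₄(u) du = 0. Let Δ^C = {(u,v,w) ∈ ℝ³ : 0 ≤ v ≤ u/2, 0 ≤ w ≤ 1−u+v, w ≤ 1+2u−5v}. Then 6·∫_{Δ^C} e^{−(3u−2)ξ₀} (1−u+v−w)(1+2u−5v−w) du dv dw < (1/3)·∫₀² e^{−(3u−2)ξ₀} g₄(u) du. -/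
open MeasureTheory intervalIntegral

/-- Region `Δ^C = {(u,v,w) : 0 ≤ v ≤ u/2, 0 ≤ w ≤ 1−u+v, w ≤ 1+2u−5v}` in ℝ³,
with coordinates `(u, v, w)`. -/
def DeltaC : Set (ℝ × ℝ × ℝ) :=
  {p | 0 ≤ p.2.1 ∧ p.2.1 ≤ p.1 / 2 ∧ 0 ≤ p.2.2 ∧ p.2.2 ≤ 1 - p.1 + p.2.1 ∧
       p.2.2 ≤ 1 + 2 * p.1 - 5 * p.2.1}

/-!
Slicing `Δ^C` by the planes `u = const` turns the left-hand side into the one-dimensional integral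
of the weight `e^{-(3u-2)ξ₀}` against an explicit piecewise polynomial density. On `(0, 2)` this
density is strictly smaller than `g₄ / 3`, so the inequality holds for every positive integrable
weight in place of the exponential.
-/

section Fubini

variable {α β : Type*} [MeasurableSpace α] [MeasurableSpace β] {μ : Measure α} {ν : Measure β}
  [SFinite μ] [SFinite ν]

theorem setIntegral_prod_fiberwise {E : Type*} [NormedAddCommGroup E] [NormedSpace ℝ E]
    {s : Set α} {t : α → Set β} {f : α × β → E} (hs : MeasurableSet s)
    (hst : MeasurableSet {p : α × β | p.1 ∈ s ∧ p.2 ∈ t p.1})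
    (hf : IntegrableOn f {p : α × β | p.1 ∈ s ∧ p.2 ∈ t p.1} (μ.prod ν)) :
    ∫ p in {p : α × β | p.1 ∈ s ∧ p.2 ∈ t p.1}, f p ∂μ.prod ν =
      ∫ x in s, ∫ y in t x, f (x, y) ∂ν ∂μ := by
  rw [← MeasureTheory.integral_indicator hst,
    integral_prod _ ((integrable_indicator_iff hst).2 hf), ← MeasureTheory.integral_indicator hs]
  congr with x
  by_cases hx : x ∈ s
  · have slice : Prod.mk x ⁻¹' {p : α × β | p.1 ∈ s ∧ p.2 ∈ t p.1} = t x := by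
      ext
      simp [hx]
    rw [Set.indicator_of_mem hx, ← slice,
      ← MeasureTheory.integral_indicator (measurable_prodMk_left hst)]
    rfl
  · simp [Set.indicator, hx]

theorem integrableOn_prod_comp_fst_mul [TopologicalSpace α] [TopologicalSpace β]
    [T2Space (α × β)] [OpensMeasurableSpace (α × β)] [IsFiniteMeasureOnCompacts ν]
    {s : Set α} {t : Set β} {ρ : α → ℝ} {q : α × β → ℝ} (hs : IsCompact s) (ht : IsCompact t)
    (hρ : IntegrableOn ρ s μ) (hq : ContinuousOn q (s ×ˢ t)) :
    IntegrableOn (fun p ↦ ρ p.1 * q p) (s ×ˢ t) (μ.prod ν) := by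
  have : IsFiniteMeasure (ν.restrict t) := ⟨by simpa using ht.measure_lt_top⟩
  refine IntegrableOn.mul_continuousOn (g := fun p ↦ ρ p.1) ?_ hq (hs.prod ht)
  rw [IntegrableOn, ← Measure.prod_restrict]
  exact Integrable.comp_fst hρ _

end Fubini

theorem integral_sub_mul_sub (a b : ℝ) :
    ∫ x in (0 : ℝ)..a, (a - x) * (b - x) = (b - a) * a ^ 2 / 2 + a ^ 3 / 3 := by
  have reflect := integral_comp_sub_left (fun x : ℝ ↦ (b - a) * x + x ^ 2) (a := 0) (b := a) a
  have expand (x : ℝ) : (a - x) * (b - x) = (b - a) * (a - x) + (a - x) ^ 2 := by ring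
  simp only [expand]
  rw [reflect, intervalIntegral.integral_add (Continuous.intervalIntegrable (by fun_prop) _ _)
    (Continuous.intervalIntegrable (by fun_prop) _ _), intervalIntegral.integral_const_mul,
    integral_id, integral_pow]
  ring

theorem integral_mul_sq_sub_mul_cube (a b c d : ℝ) :
    ∫ x in a..b, (c * x ^ 2 - d * x ^ 3) =
      c * (b ^ 3 - a ^ 3) / 3 - d * (b ^ 4 - a ^ 4) / 4 := by
  rw [intervalIntegral.integral_sub (Continuous.intervalIntegrable (by fun_prop) _ _)
    (Continuous.intervalIntegrable (by fun_prop) _ _),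
    intervalIntegral.integral_const_mul, intervalIntegral.integral_const_mul, integral_pow,
    integral_pow]
  ring

/-- The slice of `Δ^C` at `u ∈ [0, 2]`, as a region over the interval of admissible `v`. The
constraint `w ≤ 1 + 2u - 5v` is omitted: it follows from `w ≤ 1 - u + v` and `v ≤ u / 2`. -/
def DeltaCFiber (u : ℝ) : Set (ℝ × ℝ) :=
  {q | q.1 ∈ Set.Icc (max 0 (u - 1)) (u / 2) ∧ q.2 ∈ Set.Icc 0 (1 - u + q.1)}

/-- The density in `u` of the unnormalized `S^g(W^F_{•••}; C)`: for `u ∈ [0, 2]`, six times the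
integral of `(1 - u + v - w) * (1 + 2u - 5v - w)` over the slice of `Δ^C` at `u`, in closed form. -/
noncomputable def densityC (u : ℝ) : ℝ :=
  (2 - u) ^ 4 / 8 - max 0 (1 - u) ^ 3 * (3 * (2 - u) - 4 * max 0 (1 - u))

theorem DeltaC_eq_setOf_mem_DeltaCFiber :
    DeltaC = {p | p.1 ∈ Set.Icc 0 2 ∧ p.2 ∈ DeltaCFiber p.1} := by
  ext ⟨u, v, w⟩
  simp only [DeltaC, DeltaCFiber, Set.mem_ofPred_eq, Set.mem_Icc, max_le_iff]
  constructor
  · rintro ⟨hv₀, hvu, hw₀, hw, -⟩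
    refine ⟨⟨?_, ?_⟩, ⟨⟨hv₀, ?_⟩, hvu⟩, hw₀, hw⟩ <;> linarith
  · rintro ⟨-, ⟨⟨hv₀, -⟩, hvu⟩, hw₀, hw⟩
    exact ⟨hv₀, hvu, hw₀, hw, by linarith⟩

theorem DeltaC_subset_box : DeltaC ⊆ Set.Icc 0 2 ×ˢ (Set.Icc 0 1 ×ˢ Set.Icc 0 1) := by
  rintro ⟨u, v, w⟩ ⟨hv₀, hvu, hw₀, hw, -⟩
  simp only [Set.mem_prod, Set.mem_Icc] at *
  refine ⟨⟨?_, ?_⟩, ⟨?_, ?_⟩, ?_, ?_⟩ <;> linarith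

theorem isClosed_DeltaC : IsClosed DeltaC := by
  simp only [DeltaC, Set.ofPred_and]
  refine .inter ?_ (.inter ?_ (.inter ?_ (.inter ?_ ?_))) <;>
    exact isClosed_le (by fun_prop) (by fun_prop)

theorem isCompact_DeltaCFiber (u : ℝ) : IsCompact (DeltaCFiber u) := by
  have closed : IsClosed (DeltaCFiber u) := by
    simp only [DeltaCFiber, Set.mem_Icc, Set.ofPred_and]
    refine .inter (.inter ?_ ?_) (.inter ?_ ?_) <;> exact isClosed_le (by fun_prop) (by fun_prop)
  have bounded : DeltaCFiber u ⊆
      Set.Icc (max 0 (u - 1)) (u / 2) ×ˢ Set.Icc 0 (1 - u + u / 2) :=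
    fun q hq ↦ ⟨hq.1, hq.2.1, by linarith [hq.1.2, hq.2.2]⟩
  exact (isCompact_Icc.prod isCompact_Icc).of_isClosed_subset closed bounded

theorem six_mul_integral_DeltaCFiber {u : ℝ} (hu : u ∈ Set.Icc 0 2) :
    6 * ∫ q in DeltaCFiber u, (1 - u + q.1 - q.2) * (1 + 2 * u - 5 * q.1 - q.2) = densityC u := by
  have hv : max 0 (u - 1) ≤ u / 2 := max_le (by linarith [hu.1]) (by linarith [hu.2])
  have integral_w {v : ℝ} (hv : v ∈ Set.Icc (max 0 (u - 1)) (u / 2)) :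
      ∫ w in Set.Icc 0 (1 - u + v), (1 - u + v - w) * (1 + 2 * u - 5 * v - w) =
        3 / 2 * (2 - u) * (1 - u + v) ^ 2 - 8 / 3 * (1 - u + v) ^ 3 := by
    have hw : 0 ≤ 1 - u + v := by linarith [(max_le_iff.1 hv.1).2]
    rw [integral_Icc_eq_integral_Ioc, ← integral_of_le hw, integral_sub_mul_sub]
    ring
  have lower_limit : 1 - u + max 0 (u - 1) = max 0 (1 - u) := by
    rw [← max_add_add_left, max_comm]
    congr 1 <;> ring
  calc 6 * ∫ q in DeltaCFiber u, (1 - u + q.1 - q.2) * (1 + 2 * u - 5 * q.1 - q.2)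
      = 6 * ∫ v in Set.Icc (max 0 (u - 1)) (u / 2), ∫ w in Set.Icc 0 (1 - u + v),
          (1 - u + v - w) * (1 + 2 * u - 5 * v - w) := by
        congr 1
        exact setIntegral_prod_fiberwise (t := fun v ↦ Set.Icc 0 (1 - u + v))
          measurableSet_Icc (isCompact_DeltaCFiber u).measurableSet
          (ContinuousOn.integrableOn_compact (isCompact_DeltaCFiber u) (by fun_prop))
    _ = 6 * ∫ v in max 0 (u - 1)..u / 2,
          (3 / 2 * (2 - u) * (1 - u + v) ^ 2 - 8 / 3 * (1 - u + v) ^ 3) := by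
        rw [setIntegral_congr_fun measurableSet_Icc fun _ ↦ integral_w,
          integral_Icc_eq_integral_Ioc, ← integral_of_le hv]
    _ = 6 * ∫ x in max 0 (1 - u)..1 - u + u / 2,
          (3 / 2 * (2 - u) * x ^ 2 - 8 / 3 * x ^ 3) := by
        rw [integral_comp_add_left fun x ↦ 3 / 2 * (2 - u) * x ^ 2 - 8 / 3 * x ^ 3, lower_limit]
    _ = densityC u := by
        rw [integral_mul_sq_sub_mul_cube, densityC]
        ring

theorem gFour_eq_max (u : ℝ) :
    gFour u = (2 - u) ^ 3 - 9 * (2 - u) * max 0 (1 - u) ^ 2 + 10 * max 0 (1 - u) ^ 3 := by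
  rw [gFour]
  split_ifs with hu
  · rw [max_eq_right (by linarith)]
  · rw [max_eq_left (by linarith)]
    ring

theorem continuous_densityC : Continuous densityC := by
  unfold densityC
  fun_prop

theorem densityC_lt_one_third_mul_gFour {u : ℝ} (hu : u ∈ Set.Ioo 0 2) :
    densityC u < 1 / 3 * gFour u := by
  obtain ⟨hu₀, hu₂⟩ := hu
  rw [← sub_pos, gFour_eq_max, densityC]
  rcases le_total u 1 with hu₁ | hu₁
  · rw [max_eq_right (by linarith)]
    calc 0 < u ^ 3 * (4 / 3 - 9 / 8 * u) := mul_pos (by positivity) (by linarith)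
      _ = _ := by ring
  · rw [max_eq_left (by linarith)]
    calc 0 < (2 - u) ^ 3 * (1 / 3 - (2 - u) / 8) :=
          mul_pos (pow_pos (by linarith) 3) (by linarith)
      _ = _ := by ring

theorem six_mul_integral_DeltaC {ρ : ℝ → ℝ} (hρ : IntervalIntegrable ρ volume 0 2) :
    6 * ∫ p in DeltaC,
        ρ p.1 * ((1 - p.1 + p.2.1 - p.2.2) * (1 + 2 * p.1 - 5 * p.2.1 - p.2.2)) =
      ∫ u in (0 : ℝ)..2, ρ u * densityC u := by
  rw [intervalIntegrable_iff_integrableOn_Icc_of_le zero_le_two] at hρ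
  have integrable : IntegrableOn (fun p : ℝ × ℝ × ℝ ↦
      ρ p.1 * ((1 - p.1 + p.2.1 - p.2.2) * (1 + 2 * p.1 - 5 * p.2.1 - p.2.2))) DeltaC :=
    (integrableOn_prod_comp_fst_mul isCompact_Icc (isCompact_Icc.prod isCompact_Icc) hρ
      (Continuous.continuousOn (by fun_prop))).mono_set DeltaC_subset_box
  have closed := isClosed_DeltaC
  rw [DeltaC_eq_setOf_mem_DeltaCFiber] at integrable closed ⊢
  rw [Measure.volume_eq_prod,
    setIntegral_prod_fiberwise measurableSet_Icc closed.measurableSet integrable,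
    ← MeasureTheory.integral_const_mul, integral_of_le zero_le_two, ← integral_Icc_eq_integral_Ioc]
  refine setIntegral_congr_fun measurableSet_Icc fun u hu ↦ ?_
  dsimp only
  rw [MeasureTheory.integral_const_mul, mul_left_comm, six_mul_integral_DeltaCFiber hu]

theorem Sg_WF_C_lt_general {ρ : ℝ → ℝ} (hρ : IntervalIntegrable ρ volume 0 2)
    (hρ_pos : ∀ u ∈ Set.Ioo (0 : ℝ) 2, 0 < ρ u) :
    6 * (∫ p in DeltaC,
          ρ p.1 * ((1 - p.1 + p.2.1 - p.2.2) * (1 + 2 * p.1 - 5 * p.2.1 - p.2.2)))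
      < 1 / 3 * ∫ u in (0 : ℝ)..2, ρ u * gFour u := by
  have integrable_densityC := hρ.mul_continuousOn continuous_densityC.continuousOn
  have integrable_gFour := (hρ.mul_continuousOn continuous_gFour.continuousOn).const_mul (1 / 3)
  rw [six_mul_integral_DeltaC hρ, ← intervalIntegral.integral_const_mul, ← sub_pos,
    ← intervalIntegral.integral_sub integrable_gFour integrable_densityC]
  refine intervalIntegral_pos_of_pos_on (integrable_gFour.sub integrable_densityC)
    (fun u hu ↦ ?_) zero_lt_two
  have := mul_lt_mul_of_pos_left (densityC_lt_one_third_mul_gFour hu) (hρ_pos u hu)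
  linarith

/-- The weighted estimate `S^g(W^F_{•••}; C) < 1/3 · A_F(C)` for the soliton
candidate `ξ₀` of `M₄` (the root of the displayed constraint). -/
theorem Sg_WF_C_lt (ξ₀ : ℝ)
    (hξ : (∫ u in (0:ℝ)..2, (3 * u - 2) * Real.exp (-(3 * u - 2) * ξ₀) * gFour u) = 0) :
    6 * (∫ p in DeltaC,
          Real.exp (-(3 * p.1 - 2) * ξ₀) *
            ((1 - p.1 + p.2.1 - p.2.2) * (1 + 2 * p.1 - 5 * p.2.1 - p.2.2)))
      < 1 / 3 * ∫ u in (0:ℝ)..2, Real.exp (-(3 * u - 2) * ξ₀) * gFour u :=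
  Sg_WF_C_lt_general (ρ := fun u ↦ Real.exp (-(3 * u - 2) * ξ₀))
    (Continuous.intervalIntegrable (by fun_prop) 0 2) fun _ _ ↦ Real.exp_pos _
end

section
/- Let g₅(t) = 4t − 4t³ on [0,1] and let η₀ be the unique real number with ∫₀¹ (4t−2)e^{−(4t−2)η₀} g₅(t) dt = 0. With the regions Δ_A = {(t,s,r) : 0<t<1, 0<s<1, ((s<t and r>0) or (s>t and r>s−t)), ((s+t<1 and r<s) or (s+t>1 and r<1−t))}, Δ_B = {(t,s,r) : 0<t<1, −1+t+s−2r>0, ((0<s<1 and s+t>1 and r>1−t) or (1<s<1+t and r>s−t))}, Δ_{C1} = {0<t<1, t<s<1, 0<r<s−t}, Δ_{C2} = {0<t<1, 1<s<1+t, 0<r<s−t}, and integrands f_A = 6r(1−t−r)(s−r) + 3(1−t)(s−r)², f_B = 3(1−t)(1−t+s−2r)², f_{C1} = 6(s−t)(1−s)t + 3(1−t)t², f_{C2} = 3(1−t)(1+t−s)², one has 4·(∫_{Δ_A} e^{−(4t−2)η₀} f_A + ∫_{Δ_B} e^{−(4t−2)η₀} f_B + ∫_{Δ_{C1}} e^{−(4t−2)η₀}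 f_{C1} + ∫_{Δ_{C2}} e^{−(4t−2)η₀} f_{C2}) < (1/2)·∫₀¹ e^{−(4t−2)η₀} g₅(t) dt. -/
open MeasureTheory intervalIntegral

/-- Region `Δ_A` in ℝ³, coordinates `(t, s, r)`. -/
def DeltaA : Set (ℝ × ℝ × ℝ) :=
  {p | 0 < p.1 ∧ p.1 < 1 ∧ 0 < p.2.1 ∧ p.2.1 < 1 ∧
       ((p.2.1 < p.1 ∧ p.2.2 > 0) ∨ (p.2.1 > p.1 ∧ p.2.2 > p.2.1 - p.1)) ∧
       ((p.2.1 + p.1 < 1 ∧ p.2.2 < p.2.1) ∨ (p.2.1 + p.1 > 1 ∧ p.2.2 < 1 - p.1))}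

/-- Region `Δ_B` in ℝ³, coordinates `(t, s, r)`. -/
def DeltaB : Set (ℝ × ℝ × ℝ) :=
  {p | 0 < p.1 ∧ p.1 < 1 ∧ -1 + p.1 + p.2.1 - 2 * p.2.2 > 0 ∧
       ((0 < p.2.1 ∧ p.2.1 < 1 ∧ p.2.1 + p.1 > 1 ∧ p.2.2 > 1 - p.1) ∨
        (1 < p.2.1 ∧ p.2.1 < 1 + p.1 ∧ p.2.2 > p.2.1 - p.1))}

/-- Region `Δ_{C1}` in ℝ³, coordinates `(t, s, r)`. -/
def DeltaC1 : Set (ℝ × ℝ × ℝ) :=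
  {p | 0 < p.1 ∧ p.1 < 1 ∧ p.1 < p.2.1 ∧ p.2.1 < 1 ∧ 0 < p.2.2 ∧ p.2.2 < p.2.1 - p.1}

/-- Region `Δ_{C2}` in ℝ³, coordinates `(t, s, r)`. -/
def DeltaC2 : Set (ℝ × ℝ × ℝ) :=
  {p | 0 < p.1 ∧ p.1 < 1 ∧ 1 < p.2.1 ∧ p.2.1 < 1 + p.1 ∧ 0 < p.2.2 ∧ p.2.2 < p.2.1 - p.1}

/-!
Slicing by `t` and applying Fubini reduces the estimate to one between functions of `t`, which
holds pointwise on `(0, 1)`; hence any positive integrable weight may replace `e^{-(4t-2)η₀}`.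
Up to null sets, and integrating in `s` before `r`, the slice of `Δ_A` is the parallelogram
`0 < r < 1 - t`, `r < s < r + t`, and the slice of `Δ_B` is the triangle `1 - t < r < 2t - 1`,
`2r + 1 - t < s < r + t`, so the four slice integrals `a, b, c₁, c₂` are explicit polynomials,
except that `b` vanishes for `t ≤ 2/3`. Bounding `b` by `(1 - t) t⁴ / 4` gives
`4 (a + b + c₁ + c₂) ≤ 2 t (1 - t) (1 + t - t²) < 2 t (1 - t) (1 + t) = g₅(t) / 2`.
-/

/-- The integral of `F` over the slice of `S` above `x`, as a function of `x`. -/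
noncomputable def sliceIntegral {α β E : Type*} [MeasurableSpace β] [NormedAddCommGroup E]
    [NormedSpace ℝ E] (ν : Measure β) (S : Set (α × β)) (F : α × β → E) (x : α) : E :=
  ∫ y in Prod.mk x ⁻¹' S, F (x, y) ∂ν

lemma sliceIntegral_fst_mul {α β : Type*} [MeasurableSpace β] (ν : Measure β) (S : Set (α × β))
    (w : α → ℝ) (k : α × β → ℝ) (x : α) :
    sliceIntegral ν S (fun p => w p.1 * k p) x = w x * sliceIntegral ν S k x :=
  MeasureTheory.integral_const_mul (w x) fun y => k (x, y)

section Fubini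

variable {α β E : Type*} [MeasurableSpace α] [MeasurableSpace β] [NormedAddCommGroup E]
  [NormedSpace ℝ E] {μ : Measure α} {ν : Measure β} {S : Set (α × β)} {F : α × β → E}

lemma integral_indicator_mk (hS : MeasurableSet S) (x : α) :
    ∫ y, S.indicator F (x, y) ∂ν = sliceIntegral ν S F x :=
  MeasureTheory.integral_indicator (f := fun y => F (x, y)) (measurable_prodMk_left hS)

lemma integrable_sliceIntegral [SFinite ν] (hS : MeasurableSet S)
    (hF : IntegrableOn F S (μ.prod ν)) : Integrable (sliceIntegral ν S F) μ := by
  simpa only [integral_indicator_mk hS] using (hF.integrable_indicator hS).integral_prod_left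

lemma setIntegral_eq_setIntegral_sliceIntegral [SFinite μ] [SFinite ν] {I : Set α}
    (hS : MeasurableSet S) (hSI : S ⊆ I ×ˢ Set.univ) (hF : IntegrableOn F S (μ.prod ν)) :
    ∫ p in S, F p ∂μ.prod ν = ∫ x in I, sliceIntegral ν S F x ∂μ := by
  have slice_eq_empty : ∀ x ∉ I, Prod.mk x ⁻¹' S = ∅ := fun x hx =>
    Set.eq_empty_of_forall_notMem fun y hy => hx (hSI hy).1
  rw [← MeasureTheory.integral_indicator hS, integral_prod _ (hF.integrable_indicator hS)]
  simp only [integral_indicator_mk hS]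
  refine (setIntegral_eq_integral_of_forall_compl_eq_zero fun x hx => ?_).symm
  rw [sliceIntegral, slice_eq_empty x hx, setIntegral_empty]

lemma ae_fst_ne (μ : Measure α) [NullSingletonClass μ] (ν : Measure β) [SFinite ν] (c : α) :
    ∀ᵐ q ∂μ.prod ν, q.1 ≠ c :=
  Measure.quasiMeasurePreserving_fst.ae (Measure.ae_ne μ c)

end Fubini

section RegionBetween

variable {E : Type*} [NormedAddCommGroup E] {f g : ℝ → ℝ} {a b : ℝ} {F : ℝ × ℝ → E}

lemma integrableOn_regionBetween (hf : Continuous f) (hg : Continuous g) (hF : Continuous F) :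
    IntegrableOn F (regionBetween f g (Set.Ioo a b)) := by
  obtain ⟨m, hm⟩ := (isCompact_Icc (a := a) (b := b)).bddBelow_image hf.continuousOn
  obtain ⟨M, hM⟩ := (isCompact_Icc (a := a) (b := b)).bddAbove_image hg.continuousOn
  have subset_box : regionBetween f g (Set.Ioo a b) ⊆ Set.Icc a b ×ˢ Set.Icc m M := by
    rintro ⟨x, y⟩ ⟨hx, hfy, hyg⟩
    have hx' := Set.Ioo_subset_Icc_self hx
    exact ⟨hx', (hm ⟨x, hx', rfl⟩).trans hfy.le, hyg.le.trans (hM ⟨x, hx', rfl⟩)⟩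
  exact (hF.continuousOn.integrableOn_compact (isCompact_Icc.prod isCompact_Icc)).mono_set
    subset_box

variable [NormedSpace ℝ E]

lemma setIntegral_regionBetween (hf : Continuous f) (hg : Continuous g) (hab : a ≤ b)
    (hfg : ∀ x ∈ Set.Ioo a b, f x ≤ g x) (hF : Continuous F) :
    ∫ z in regionBetween f g (Set.Ioo a b), F z = ∫ x in a..b, ∫ y in f x..g x, F (x, y) := by
  rw [intervalIntegral.integral_of_le hab, integral_Ioc_eq_integral_Ioo, Measure.volume_eq_prod,
    setIntegral_eq_setIntegral_sliceIntegral
      (measurableSet_regionBetween hf.measurable hg.measurable measurableSet_Ioo)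
      (regionBetween_subset f g _) (integrableOn_regionBetween hf hg hF)]
  refine setIntegral_congr_fun measurableSet_Ioo fun x hx => ?_
  have slice_eq : Prod.mk x ⁻¹' regionBetween f g (Set.Ioo a b) = Set.Ioo (f x) (g x) := by
    ext y; exact and_iff_right hx
  rw [sliceIntegral, intervalIntegral.integral_of_le (hfg x hx), integral_Ioc_eq_integral_Ioo,
    slice_eq]

lemma setIntegral_swap_preimage_regionBetween (hf : Continuous f) (hg : Continuous g)
    (hab : a ≤ b) (hfg : ∀ y ∈ Set.Ioo a b, f y ≤ g y) (hF : Continuous F) :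
    ∫ q in Prod.swap ⁻¹' regionBetween f g (Set.Ioo a b), F q =
      ∫ y in a..b, ∫ x in f y..g y, F (x, y) :=
  (Measure.measurePreserving_swap.setIntegral_preimage_emb
    MeasurableEquiv.prodComm.measurableEmbedding (F ∘ Prod.swap) _).trans
    (setIntegral_regionBetween hf hg hab hfg (hF.comp continuous_swap))

end RegionBetween

section Weight

variable {Y : Type*} [TopologicalSpace Y] [MeasurableSpace Y] [BorelSpace Y] [T2Space Y]
  {ν : Measure Y} [SFinite ν] [IsFiniteMeasureOnCompacts ν]

lemma integrableOn_fst_mul {X : Type*} [TopologicalSpace X] [MeasurableSpace X] [BorelSpace X]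
    [T2Space X] [SecondCountableTopologyEither X Y] {μ : Measure X} [SFinite μ]
    {K : Set X} {L : Set Y} (hK : IsCompact K) (hL : IsCompact L) {w : X → ℝ}
    (hw : IntegrableOn w K μ) {k : X × Y → ℝ} (hk : ContinuousOn k (K ×ˢ L)) :
    IntegrableOn (fun p => w p.1 * k p) (K ×ˢ L) (μ.prod ν) := by
  have hw' : IntegrableOn (fun p : X × Y => w p.1) (K ×ˢ L) (μ.prod ν) := by
    have hL' : IntegrableOn (fun _ : Y => (1 : ℝ)) L ν :=
      integrableOn_const hL.measure_lt_top.ne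
    simpa only [IntegrableOn, Measure.prod_restrict, mul_one] using hw.mul_prod hL'
  exact hw'.mul_continuousOn hk (hK.prod hL)

variable {a b : ℝ} {w : ℝ → ℝ} {k : ℝ × Y → ℝ} {S : Set (ℝ × Y)} {L : Set Y}

lemma integrableOn_fst_mul_of_subset (hab : a ≤ b) (hw : IntervalIntegrable w volume a b)
    (hk : Continuous k) (hL : IsCompact L) (hSL : S ⊆ Set.Ioo a b ×ˢ L) :
    IntegrableOn (fun p => w p.1 * k p) S ((volume : Measure ℝ).prod ν) :=
  (integrableOn_fst_mul isCompact_Icc hL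
    ((intervalIntegrable_iff_integrableOn_Icc_of_le hab).mp hw) hk.continuousOn).mono_set
    (hSL.trans (Set.prod_mono_left Set.Ioo_subset_Icc_self))

lemma intervalIntegrable_mul_sliceIntegral (hab : a ≤ b) (hw : IntervalIntegrable w volume a b)
    (hk : Continuous k) (hS : MeasurableSet S) (hL : IsCompact L)
    (hSL : S ⊆ Set.Ioo a b ×ˢ L) :
    IntervalIntegrable (fun t => w t * sliceIntegral ν S k t) volume a b := by
  simp only [← sliceIntegral_fst_mul]
  exact (integrable_sliceIntegral hS
    (integrableOn_fst_mul_of_subset hab hw hk hL hSL)).intervalIntegrable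

lemma setIntegral_fst_mul (hab : a ≤ b) (hw : IntervalIntegrable w volume a b)
    (hk : Continuous k) (hS : MeasurableSet S) (hL : IsCompact L)
    (hSL : S ⊆ Set.Ioo a b ×ˢ L) :
    ∫ p in S, w p.1 * k p ∂(volume : Measure ℝ).prod ν =
      ∫ t in a..b, w t * sliceIntegral ν S k t := by
  rw [intervalIntegral.integral_of_le hab, integral_Ioc_eq_integral_Ioo,
    setIntegral_eq_setIntegral_sliceIntegral (ν := ν) hS
      (hSL.trans (Set.prod_mono_right (Set.subset_univ L)))
      (integrableOn_fst_mul_of_subset hab hw hk hL hSL)]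
  simp only [sliceIntegral_fst_mul]

lemma integral_mul_lt_integral_mul_of_pos_on {φ ψ : ℝ → ℝ} (hab : a < b)
    (hφ : IntervalIntegrable (fun t => w t * φ t) volume a b)
    (hψ : IntervalIntegrable (fun t => w t * ψ t) volume a b)
    (hw_pos : ∀ t ∈ Set.Ioo a b, 0 < w t) (hlt : ∀ t ∈ Set.Ioo a b, φ t < ψ t) :
    ∫ t in a..b, w t * φ t < ∫ t in a..b, w t * ψ t := by
  rw [← sub_pos, ← intervalIntegral.integral_sub hψ hφ]
  refine intervalIntegral_pos_of_pos_on (hψ.sub hφ) (fun t ht => ?_) hab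
  exact sub_pos.mpr (mul_lt_mul_of_pos_left (hlt t ht) (hw_pos t ht))

end Weight

/-- The volume `vol(W^{E_l}_{(1,t,s)} − r E_C)` at a point `(t, s, r)` of `Δ_A`. -/
def volA (p : ℝ × ℝ × ℝ) : ℝ :=
  6 * p.2.2 * (1 - p.1 - p.2.2) * (p.2.1 - p.2.2) + 3 * (1 - p.1) * (p.2.1 - p.2.2) ^ 2

/-- The volume `vol(W^{E_l}_{(1,t,s)} − r E_C)` at a point `(t, s, r)` of `Δ_B`. -/
def volB (p : ℝ × ℝ × ℝ) : ℝ :=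
  3 * (1 - p.1) * (1 - p.1 + p.2.1 - 2 * p.2.2) ^ 2

/-- The volume `vol(W^{E_l}_{(1,t,s)} − r E_C)` at a point `(t, s, r)` of `Δ_{C1}`, where it does
not depend on `r`. -/
def volC1 (p : ℝ × ℝ × ℝ) : ℝ :=
  6 * (p.2.1 - p.1) * (1 - p.2.1) * p.1 + 3 * (1 - p.1) * p.1 ^ 2

/-- The volume `vol(W^{E_l}_{(1,t,s)} − r E_C)` at a point `(t, s, r)` of `Δ_{C2}`, where it does
not depend on `r`. -/
def volC2 (p : ℝ × ℝ × ℝ) : ℝ :=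
  3 * (1 - p.1) * (1 + p.1 - p.2.1) ^ 2

@[fun_prop]
lemma continuous_volA : Continuous volA := by unfold volA; fun_prop

@[fun_prop]
lemma continuous_volB : Continuous volB := by unfold volB; fun_prop

@[fun_prop]
lemma continuous_volC1 : Continuous volC1 := by unfold volC1; fun_prop

@[fun_prop]
lemma continuous_volC2 : Continuous volC2 := by unfold volC2; fun_prop

lemma measurableSet_deltaA : MeasurableSet DeltaA := by unfold DeltaA; measurability

lemma measurableSet_deltaB : MeasurableSet DeltaB := by unfold DeltaB; measurability

lemma measurableSet_deltaC1 : MeasurableSet DeltaC1 := by unfold DeltaC1; measurability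

lemma measurableSet_deltaC2 : MeasurableSet DeltaC2 := by unfold DeltaC2; measurability

lemma deltaA_subset_box : DeltaA ⊆ Set.Ioo 0 1 ×ˢ Set.Icc 0 2 ×ˢ Set.Icc 0 2 := by
  rintro ⟨t, s, r⟩ h
  simp only [DeltaA, Set.mem_ofPred_eq, Set.mem_prod, Set.mem_Ioo, Set.mem_Icc] at h ⊢
  grind

lemma deltaB_subset_box : DeltaB ⊆ Set.Ioo 0 1 ×ˢ Set.Icc 0 2 ×ˢ Set.Icc 0 2 := by
  rintro ⟨t, s, r⟩ h
  simp only [DeltaB, Set.mem_ofPred_eq, Set.mem_prod, Set.mem_Ioo, Set.mem_Icc] at h ⊢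
  grind

lemma deltaC1_subset_box : DeltaC1 ⊆ Set.Ioo 0 1 ×ˢ Set.Icc 0 2 ×ˢ Set.Icc 0 2 := by
  rintro ⟨t, s, r⟩ h
  simp only [DeltaC1, Set.mem_ofPred_eq, Set.mem_prod, Set.mem_Ioo, Set.mem_Icc] at h ⊢
  grind

lemma deltaC2_subset_box : DeltaC2 ⊆ Set.Ioo 0 1 ×ˢ Set.Icc 0 2 ×ˢ Set.Icc 0 2 := by
  rintro ⟨t, s, r⟩ h
  simp only [DeltaC2, Set.mem_ofPred_eq, Set.mem_prod, Set.mem_Ioo, Set.mem_Icc] at h ⊢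
  grind

section Slices

variable {t : ℝ}

lemma deltaA_slice_ae_eq (ht : t ∈ Set.Ioo 0 1) :
    (Prod.mk t ⁻¹' DeltaA : Set (ℝ × ℝ)) =ᵐ[volume]
      Prod.swap ⁻¹' regionBetween id (· + t) (Set.Ioo 0 (1 - t)) := by
  refine Filter.eventuallyEq_set.mpr ?_
  filter_upwards [ae_fst_ne volume volume t, ae_fst_ne volume volume (1 - t)] with ⟨s, r⟩ hs hs'
  simp only [DeltaA, regionBetween, Set.mem_preimage, Set.mem_ofPred_eq, Set.mem_Ioo,
    Prod.swap_prod_mk, id_eq] at ht hs hs' ⊢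
  grind

lemma deltaB_slice_ae_eq (ht : t ∈ Set.Ioo 0 1) :
    (Prod.mk t ⁻¹' DeltaB : Set (ℝ × ℝ)) =ᵐ[volume]
      Prod.swap ⁻¹'
        regionBetween (fun r => 2 * r + 1 - t) (· + t) (Set.Ioo (1 - t) (2 * t - 1)) := by
  refine Filter.eventuallyEq_set.mpr ?_
  filter_upwards [ae_fst_ne volume volume 1] with ⟨s, r⟩ hs
  simp only [DeltaB, regionBetween, Set.mem_preimage, Set.mem_ofPred_eq, Set.mem_Ioo,
    Prod.swap_prod_mk] at ht hs ⊢
  grind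

lemma deltaC1_slice_eq (ht : t ∈ Set.Ioo 0 1) :
    Prod.mk t ⁻¹' DeltaC1 = regionBetween (fun _ => 0) (· - t) (Set.Ioo t 1) := by
  ext ⟨s, r⟩
  simp only [DeltaC1, regionBetween, Set.mem_preimage, Set.mem_ofPred_eq, Set.mem_Ioo] at ht ⊢
  grind

lemma deltaC2_slice_eq (ht : t ∈ Set.Ioo 0 1) :
    Prod.mk t ⁻¹' DeltaC2 = regionBetween (fun _ => 0) (· - t) (Set.Ioo 1 (1 + t)) := by
  ext ⟨s, r⟩
  simp only [DeltaC2, regionBetween, Set.mem_preimage, Set.mem_ofPred_eq, Set.mem_Ioo] at ht ⊢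
  grind

lemma sliceIntegral_deltaA (ht : t ∈ Set.Ioo 0 1) :
    sliceIntegral volume DeltaA volA t = t ^ 2 * (1 - t) ^ 2 * (1 + t) / 2 := by
  have integral_volA (r : ℝ) : ∫ s in r..(r + t), volA (t, s, r) =
      3 * r * (1 - t - r) * t ^ 2 + (1 - t) * t ^ 3 := by
    rw [intervalIntegral.integral_deriv_eq_sub'
      (fun s => 3 * r * (1 - t - r) * (s - r) ^ 2 + (1 - t) * (s - r) ^ 3)
      (by ext s; simp (disch := fun_prop) [volA, deriv_fun_add]; ring) (by fun_prop)
      (by fun_prop)]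
    ring
  rw [sliceIntegral, setIntegral_congr_set (deltaA_slice_ae_eq ht),
    setIntegral_swap_preimage_regionBetween continuous_id (by fun_prop) (sub_pos.mpr ht.2).le
      (fun r _ => by simpa using ht.1.le) (by fun_prop)]
  simp only [id_eq, integral_volA]
  rw [intervalIntegral.integral_deriv_eq_sub'
    (fun r => 3 / 2 * (1 - t) * t ^ 2 * r ^ 2 - t ^ 2 * r ^ 3 + (1 - t) * t ^ 3 * r)
    (by ext r; simp (disch := fun_prop) [deriv_fun_add, deriv_fun_sub]; ring) (by fun_prop)
    (by fun_prop)]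
  ring

lemma sliceIntegral_deltaB (ht₀ : 2 / 3 ≤ t) (ht₁ : t < 1) :
    sliceIntegral volume DeltaB volB t =
      (1 - t) * ((t ^ 4 - (2 - 2 * t) ^ 4) / 4 - 8 * (1 - t) ^ 3 * (3 * t - 2)) := by
  have integral_volB (r : ℝ) : ∫ s in (2 * r + 1 - t)..(r + t), volB (t, s, r) =
      (1 - t) * ((1 - r) ^ 3 - 8 * (1 - t) ^ 3) := by
    rw [intervalIntegral.integral_deriv_eq_sub' (fun s => (1 - t) * (1 - t + s - 2 * r) ^ 3)
      (by ext s; simp (disch := fun_prop) [volB]; ring) (by fun_prop) (by fun_prop)]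
    ring
  rw [sliceIntegral, setIntegral_congr_set (deltaB_slice_ae_eq ⟨by linarith, ht₁⟩),
    setIntegral_swap_preimage_regionBetween (by fun_prop) (by fun_prop) (by linarith)
      (fun r hr => by linarith [hr.2]) (by fun_prop)]
  simp only [integral_volB]
  rw [intervalIntegral.integral_deriv_eq_sub'
    (fun r => -(1 - t) * (1 - r) ^ 4 / 4 - 8 * (1 - t) ^ 4 * r)
    (by ext r; simp (disch := fun_prop) [deriv_fun_sub]; ring) (by fun_prop) (by fun_prop)]
  ring

lemma sliceIntegral_deltaB_eq_zero (ht₀ : 0 < t) (ht₁ : t ≤ 2 / 3) :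
    sliceIntegral volume DeltaB volB t = 0 := by
  have Ioo_eq_empty : Set.Ioo (1 - t) (2 * t - 1) = ∅ := Set.Ioo_eq_empty (by linarith)
  rw [sliceIntegral, setIntegral_congr_set (deltaB_slice_ae_eq ⟨ht₀, by linarith⟩)]
  simp [regionBetween, Ioo_eq_empty]

lemma sliceIntegral_deltaB_le (ht : t ∈ Set.Ioo 0 1) :
    sliceIntegral volume DeltaB volB t ≤ (1 - t) * t ^ 4 / 4 := by
  obtain ⟨ht₀, ht₁⟩ := ht
  have : 0 < 1 - t := sub_pos.mpr ht₁
  rcases le_total t (2 / 3) with hle | hge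
  · rw [sliceIntegral_deltaB_eq_zero ht₀ hle]
    positivity
  · have dropped_nonneg : 0 ≤ (1 - t) * ((2 - 2 * t) ^ 4 / 4 + 8 * (1 - t) ^ 3 * (3 * t - 2)) := by
      have : 0 ≤ 3 * t - 2 := by linarith
      positivity
    rw [sliceIntegral_deltaB hge ht₁]
    linarith

lemma sliceIntegral_deltaC1 (ht : t ∈ Set.Ioo 0 1) :
    sliceIntegral volume DeltaC1 volC1 t = t * (1 - t) ^ 3 * (1 + 2 * t) / 2 := by
  rw [sliceIntegral, deltaC1_slice_eq ht, setIntegral_regionBetween (by fun_prop) (by fun_prop)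
    ht.2.le (fun s hs => sub_nonneg.mpr hs.1.le) (by fun_prop)]
  simp only [volC1, intervalIntegral.integral_const, sub_zero, smul_eq_mul]
  rw [intervalIntegral.integral_deriv_eq_sub'
    (fun s => 2 * t * (1 - t) * (s - t) ^ 3 - 3 / 2 * t * (s - t) ^ 4 +
      3 / 2 * (1 - t) * t ^ 2 * (s - t) ^ 2)
    (by ext s; simp (disch := fun_prop) [deriv_fun_add, deriv_fun_sub]; ring)
    (by fun_prop) (by fun_prop)]
  ring

lemma sliceIntegral_deltaC2 (ht : t ∈ Set.Ioo 0 1) :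
    sliceIntegral volume DeltaC2 volC2 t = (1 - t) * t ^ 3 * (4 - 3 * t) / 4 := by
  rw [sliceIntegral, deltaC2_slice_eq ht, setIntegral_regionBetween (by fun_prop) (by fun_prop)
    (by linarith [ht.1]) (fun s hs => sub_nonneg.mpr (ht.2.trans hs.1).le)
    (by fun_prop)]
  simp only [volC2, intervalIntegral.integral_const, sub_zero, smul_eq_mul]
  rw [intervalIntegral.integral_deriv_eq_sub'
    (fun s => 3 / 4 * (1 - t) * (1 + t - s) ^ 4 - (1 - t) * (1 + t - s) ^ 3)
    (by ext s; simp (disch := fun_prop) [deriv_fun_sub]; ring)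
    (by fun_prop) (by fun_prop)]
  ring

lemma four_mul_sliceIntegral_lt_half_gFive (ht : t ∈ Set.Ioo 0 1) :
    4 * (sliceIntegral volume DeltaA volA t + sliceIntegral volume DeltaB volB t +
      sliceIntegral volume DeltaC1 volC1 t + sliceIntegral volume DeltaC2 volC2 t) <
        1 / 2 * gFive t := by
  have margin_pos : 0 < 2 * t ^ 3 * (1 - t) :=
    mul_pos (mul_pos two_pos (pow_pos ht.1 3)) (sub_pos.mpr ht.2)
  rw [sliceIntegral_deltaA ht, sliceIntegral_deltaC1 ht, sliceIntegral_deltaC2 ht]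
  calc 4 * (t ^ 2 * (1 - t) ^ 2 * (1 + t) / 2 + sliceIntegral volume DeltaB volB t +
        t * (1 - t) ^ 3 * (1 + 2 * t) / 2 + (1 - t) * t ^ 3 * (4 - 3 * t) / 4)
    _ ≤ 4 * (t ^ 2 * (1 - t) ^ 2 * (1 + t) / 2 + (1 - t) * t ^ 4 / 4 +
        t * (1 - t) ^ 3 * (1 + 2 * t) / 2 + (1 - t) * t ^ 3 * (4 - 3 * t) / 4) := by
      gcongr
      exact sliceIntegral_deltaB_le ht
    _ = 1 / 2 * gFive t - 2 * t ^ 3 * (1 - t) := by rw [gFive]; ring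
    _ < 1 / 2 * gFive t := sub_lt_self _ margin_pos

end Slices

theorem Sg_WEl_EC_lt_general (w : ℝ → ℝ) (hw : IntervalIntegrable w volume 0 1)
    (hw_pos : ∀ t ∈ Set.Ioo 0 1, 0 < w t) :
    4 * ((∫ p in DeltaA, w p.1 * volA p) + (∫ p in DeltaB, w p.1 * volB p) +
        (∫ p in DeltaC1, w p.1 * volC1 p) + (∫ p in DeltaC2, w p.1 * volC2 p)) <
      1 / 2 * ∫ t in (0 : ℝ)..1, w t * gFive t := by
  have hbox : IsCompact (Set.Icc (0 : ℝ) 2 ×ˢ Set.Icc (0 : ℝ) 2) := isCompact_Icc.prod isCompact_Icc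
  have hA := intervalIntegrable_mul_sliceIntegral (ν := volume) zero_le_one hw continuous_volA
    measurableSet_deltaA hbox deltaA_subset_box
  have hB := intervalIntegrable_mul_sliceIntegral (ν := volume) zero_le_one hw continuous_volB
    measurableSet_deltaB hbox deltaB_subset_box
  have hC1 := intervalIntegrable_mul_sliceIntegral (ν := volume) zero_le_one hw continuous_volC1
    measurableSet_deltaC1 hbox deltaC1_subset_box
  have hC2 := intervalIntegrable_mul_sliceIntegral (ν := volume) zero_le_one hw continuous_volC2
    measurableSet_deltaC2 hbox deltaC2_subset_box
  have hg : IntervalIntegrable (fun t => w t * (1 / 2 * gFive t)) volume 0 1 :=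
    hw.mul_continuousOn (by unfold gFive; fun_prop)
  have hsum := (((hA.add hB).add hC1).add hC2).const_mul 4
  simp only [← mul_add, mul_left_comm (4 : ℝ)] at hsum
  calc
    _ = ∫ t in (0 : ℝ)..1, w t * (4 * (sliceIntegral volume DeltaA volA t +
        sliceIntegral volume DeltaB volB t + sliceIntegral volume DeltaC1 volC1 t +
        sliceIntegral volume DeltaC2 volC2 t)) := by
      simp only [Measure.volume_eq_prod ℝ (ℝ × ℝ)]
      rw [setIntegral_fst_mul zero_le_one hw continuous_volA measurableSet_deltaA hbox
          deltaA_subset_box,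
        setIntegral_fst_mul zero_le_one hw continuous_volB measurableSet_deltaB hbox
          deltaB_subset_box,
        setIntegral_fst_mul zero_le_one hw continuous_volC1 measurableSet_deltaC1 hbox
          deltaC1_subset_box,
        setIntegral_fst_mul zero_le_one hw continuous_volC2 measurableSet_deltaC2 hbox
          deltaC2_subset_box,
        ← intervalIntegral.integral_add hA hB, ← intervalIntegral.integral_add (hA.add hB) hC1,
        ← intervalIntegral.integral_add ((hA.add hB).add hC1) hC2,
        ← intervalIntegral.integral_const_mul]
      simp only [← mul_add, mul_left_comm (4 : ℝ)]
    _ < ∫ t in (0 : ℝ)..1, w t * (1 / 2 * gFive t) :=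
      integral_mul_lt_integral_mul_of_pos_on zero_lt_one hsum hg hw_pos fun t ht =>
        four_mul_sliceIntegral_lt_half_gFive ht
    _ = 1 / 2 * ∫ t in (0 : ℝ)..1, w t * gFive t := by
      simp only [mul_left_comm _ (1 / 2 : ℝ), intervalIntegral.integral_const_mul]

/-- The weighted estimate `S^g(W^{E_l}_{•••}; E_C) < 1/2` for the soliton candidate `η₀`
of `M₅` (the root of the displayed constraint). -/
theorem Sg_WEl_EC_lt (η₀ : ℝ)
    (hη : (∫ t in (0:ℝ)..1, (4 * t - 2) * Real.exp (-(4 * t - 2) * η₀) * gFive t) = 0) :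
    4 * ((∫ p in DeltaA,
            Real.exp (-(4 * p.1 - 2) * η₀) *
              (6 * p.2.2 * (1 - p.1 - p.2.2) * (p.2.1 - p.2.2) +
                3 * (1 - p.1) * (p.2.1 - p.2.2) ^ 2)) +
         (∫ p in DeltaB,
            Real.exp (-(4 * p.1 - 2) * η₀) *
              (3 * (1 - p.1) * (1 - p.1 + p.2.1 - 2 * p.2.2) ^ 2)) +
         (∫ p in DeltaC1,
            Real.exp (-(4 * p.1 - 2) * η₀) *
              (6 * (p.2.1 - p.1) * (1 - p.2.1) * p.1 + 3 * (1 - p.1) * p.1 ^ 2)) +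
         (∫ p in DeltaC2,
            Real.exp (-(4 * p.1 - 2) * η₀) *
              (3 * (1 - p.1) * (1 + p.1 - p.2.1) ^ 2)))
      < 1 / 2 * ∫ t in (0:ℝ)..1, Real.exp (-(4 * t - 2) * η₀) * gFive t := by
  exact Sg_WEl_EC_lt_general (fun t => Real.exp (-(4 * t - 2) * η₀))
    (Continuous.intervalIntegrable (by fun_prop) 0 1) fun t _ => Real.exp_pos _
end
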